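/- Let g₁, g₂ : ℝ → [0,∞) be nondecreasing and ψ₁, ψ₂ ∈ ℝ. Then the function F(p,q) = g₁(p)·((p + ψ₁) − (q + ψ₂))⁺ − g₂(q)·((q + ψ₂) − (p + ψ₁))⁺, where x⁺ = max(x,0), is nondecreasing in p for every fixed q and nonincreasing in q for every fixed p. -/

import Mathlib

noncomputable section

/-- monotonicity of the upwind numerical flux. Let `g₁, g₂ : ℝ → [0,∞)` be
nondecreasing and `ψ₁, ψ₂ ∈ ℝ`. Then the upwind flux
`F(p,q) = g₁(p) ((p+ψ₁) - (q+ψ₂))⁺ - g₂(q) ((q+ψ₂) - (p+ψ₁))⁺` is nondecreasing in `p` for fixed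
`q` and nonincreasing in `q` for fixed `p`. -/
theorem upwind_flux_monotone
    (g₁ g₂ : ℝ → ℝ) (hg₁ : Monotone g₁) (hg₂ : Monotone g₂)
    (hg₁0 : ∀ x, 0 ≤ g₁ x) (hg₂0 : ∀ x, 0 ≤ g₂ x) (ψ₁ ψ₂ : ℝ) :
    (∀ q : ℝ, Monotone (fun p : ℝ =>
      g₁ p * max ((p + ψ₁) - (q + ψ₂)) 0 - g₂ q * max ((q + ψ₂) - (p + ψ₁)) 0)) ∧
    (∀ p : ℝ, Antitone (fun q : ℝ =>
      g₁ p * max ((p + ψ₁) - (q + ψ₂)) 0 - g₂ q * max ((q + ψ₂) - (p + ψ₁)) 0)) := by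
  constructor
  · intro q a b hab
    have h1 : max ((a + ψ₁) - (q + ψ₂)) 0 ≤ max ((b + ψ₁) - (q + ψ₂)) 0 :=
      max_le_max (by linarith) le_rfl
    have h2 : max ((q + ψ₂) - (b + ψ₁)) 0 ≤ max ((q + ψ₂) - (a + ψ₁)) 0 :=
      max_le_max (by linarith) le_rfl
    exact sub_le_sub (mul_le_mul (hg₁ hab) h1 (le_max_right _ _) (hg₁0 b))
      (mul_le_mul_of_nonneg_left h2 (hg₂0 q))
  · intro p a b hab
    have h1 : max ((p + ψ₁) - (b + ψ₂)) 0 ≤ max ((p + ψ₁) - (a + ψ₂)) 0 :=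
      max_le_max (by linarith) le_rfl
    have h2 : max ((a + ψ₂) - (p + ψ₁)) 0 ≤ max ((b + ψ₂) - (p + ψ₁)) 0 :=
      max_le_max (by linarith) le_rfl
    exact sub_le_sub (mul_le_mul_of_nonneg_left h1 (hg₁0 p))
      (mul_le_mul (hg₂ hab) h2 (le_max_right _ _) (hg₂0 b))
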